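/- (Theorem 4: asymptotic upper bound on distillable resource) Let ρ be a state on H_A and φ a pure state on H_B. Suppose D > 0 is an achievable distillation rate, i.e., there exist linear maps Γ_n : T_sa(H_A^{⊗n}) → T_sa(H_B^{⊗⌊Dn⌋}), each contracting both the trace norm and the resource norms, such that (1/2)‖Γ_n(ρ^{⊗n}) − φ^{⊗⌊Dn⌋}‖₁ → 0 as n → ∞. Then for every ε ∈ [0,1): D · (− limsup_{m→∞} (1/m) log₂ ‖φ^{⊗m}‖_μ°) ≤ liminf_{n→∞} (1/n) inf{log₂‖X‖_μ : X ∈ B_ε(ρ^{⊗n})}. -/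

import Mathlib

/-!
The maps `Γ n` send an operator `X` near `ρ^{⊗n}` to an operator `Y` whose overlap with the
projection `φ^{⊗m}`, `m = ⌊D n⌋`, is bounded below: since `|⟨P, Z⟩| ≤ ‖Z‖₁` for every projection
`P` (`abs_hip_le_trNorm`) and `⟨φ^{⊗m}, φ^{⊗m}⟩ = 1`, contractivity of `Γ n` in trace norm gives
`⟨φ^{⊗m}, Y⟩ ≥ 1 - ε - o(1)`. By duality (`hip_le_dual_mul`) and contractivity in the resource norm
this overlap is at most `‖φ^{⊗m}‖_μ° ‖X‖_μ`, so `log ‖X‖_μ ≥ O(1) - log ‖φ^{⊗m}‖_μ°` uniformly in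
`X`. Dividing by `n` and using `⌊D n⌋ / n → D` gives the bound. The limits may be infinite, so the
last step compares both sides with real thresholds.
-/

open scoped ComplexOrder
open Filter

noncomputable section

/-- The real vector space of self-adjoint (Hermitian) operators on `ℂ^ι`. -/
abbrev HMat (ι : Type) [Fintype ι] [DecidableEq ι] : Type :=
  selfAdjoint (Matrix ι ι ℂ)

variable {ι κ : Type} [Fintype ι] [DecidableEq ι] [Fintype κ] [DecidableEq κ]

/-- The matrix underlying a self-adjoint operator is Hermitian. -/
def herm (X : HMat ι) : X.1.IsHermitian := X.2

/-- The (real) Hilbert–Schmidt inner product `⟨Q, X⟩ = Tr (Q X)`. -/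
def hip (Q X : HMat ι) : ℝ := (Matrix.trace (Q.1 * X.1)).re

/-- The trace norm of a self-adjoint operator: the sum of absolute values of eigenvalues. -/
def trNorm (X : HMat ι) : ℝ := ∑ i, |(herm X).eigenvalues i|

/-- The operator norm of a self-adjoint operator: the largest absolute value of an eigenvalue. -/
def opNorm (X : HMat ι) : ℝ := ⨆ i, |(herm X).eigenvalues i|

/-- A state: a positive semidefinite operator of unit trace. -/
def IsState (ρ : HMat ι) : Prop := ρ.1.PosSemidef ∧ Matrix.trace ρ.1 = 1

/-- A pure state: a rank-one orthogonal projection. -/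
def IsPureState (φ : HMat ι) : Prop := IsState φ ∧ φ.1 * φ.1 = φ.1

/-- A norm-like function on self-adjoint operators. -/
structure MatNorm (ι : Type) [Fintype ι] [DecidableEq ι] where
  toFun : HMat ι → ℝ
  eq_zero' : ∀ X, toFun X = 0 → X = 0
  smul' : ∀ (t : ℝ) (X), toFun (t • X) = |t| * toFun X
  add_le' : ∀ X Y, toFun (X + Y) ≤ toFun X + toFun Y

/-- A resource norm: a norm with `‖ρ‖ ≥ 1` on every state. -/
structure ResourceNorm (ι : Type) [Fintype ι] [DecidableEq ι] extends MatNorm ι where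
  one_le_state' : ∀ ρ, IsState ρ → 1 ≤ toFun ρ

/-- The dual norm `‖Q‖° = sup {⟨Q, X⟩ : ‖X‖ ≤ 1}`. -/
def dualNormF (ν : HMat ι → ℝ) (Q : HMat ι) : ℝ :=
  sSup {r | ∃ X, ν X ≤ 1 ∧ r = hip Q X}

/-- Membership in the class `O_μ` of maps contracting the trace norm and the resource norms. -/
def MemO (νi : ResourceNorm ι) (νo : ResourceNorm κ) (Λ : HMat ι →ₗ[ℝ] HMat κ) : Prop :=
  (∀ X, trNorm (Λ X) ≤ trNorm X) ∧ (∀ X, νo.toFun (Λ X) ≤ νi.toFun X)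

/-- The trace-norm ε-ball around a state. -/
def ball (ρ : HMat ι) (ε : ℝ) : Set (HMat ι) :=
  {X | trNorm X ≤ 1 ∧ trNorm (X - ρ) ≤ ε}

/-- Loewner order: `A ≤ B` iff `B - A` is positive semidefinite. -/
def loew (A B : Matrix ι ι ℂ) : Prop := (B - A).PosSemidef

/-- The feasible values `⟨Q, Z⟩` entering the emancipated hypothesis testing quantity. -/
def dhSet (ρ Z : HMat ι) (ε : ℝ) : Set ℝ :=
  {r | ∃ Q : HMat ι, loew (-(1 : Matrix ι ι ℂ)) Q.1 ∧ loew Q.1 1 ∧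
        1 - ε ≤ hip Q ρ ∧ r = hip Q Z}

/-- The non-logarithmic emancipated hypothesis testing quantity `d_ħ^ε(ρ‖Z)`,
with value `+∞` when the infimum is `≤ 0`. -/
def dEmanc (ρ Z : HMat ι) (ε : ℝ) : EReal :=
  if 0 < sInf (dhSet ρ Z ε) then (((sInf (dhSet ρ Z ε))⁻¹ : ℝ) : EReal) else ⊤

/-- The emancipated hypothesis testing relative entropy `D_ħ^ε(ρ‖Z)` (base-2 logarithmic form),
with value `+∞` when the infimum is `≤ 0`. -/
def DEmanc (ρ Z : HMat ι) (ε : ℝ) : EReal :=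
  if 0 < sInf (dhSet ρ Z ε) then ((-Real.logb 2 (sInf (dhSet ρ Z ε)) : ℝ) : EReal) else ⊤


/-- The `n`-fold tensor (Kronecker) power of a self-adjoint operator. -/
def tpow {d : ℕ} (A : HMat (Fin d)) (n : ℕ) : HMat (Fin n → Fin d) :=
  ⟨Matrix.of fun i j => ∏ k, A.1 (i k) (j k), by
    refine Matrix.IsHermitian.isSelfAdjoint ?_
    refine Matrix.IsHermitian.ext fun i j => ?_
    simp only [Matrix.of_apply]
    rw [star_prod]
    exact Finset.prod_congr rfl fun k _ => (herm A).apply (i k) (j k)⟩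

/-- Combining operators on `m` and `n` copies into one on `m + n` copies (tensor product). -/
def kron {d m n : ℕ} (Y : HMat (Fin m → Fin d)) (Z : HMat (Fin n → Fin d)) :
    HMat (Fin (m + n) → Fin d) :=
  ⟨Matrix.of fun i j =>
      Y.1 (fun k => i (Fin.castAdd n k)) (fun k => j (Fin.castAdd n k)) *
        Z.1 (fun k => i (Fin.natAdd m k)) (fun k => j (Fin.natAdd m k)), by
    refine Matrix.IsHermitian.isSelfAdjoint ?_
    refine Matrix.IsHermitian.ext fun i j => ?_
    simp only [Matrix.of_apply, star_mul']
    rw [(herm Y).apply, (herm Z).apply]⟩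

/-- In finite dimension a linear functional is bounded with respect to any norm; this is what makes
the supremum defining the dual norm a genuine one. -/
lemma exists_bound_of_norm {V : Type} [AddCommGroup V] [Module ℝ V] [FiniteDimensional ℝ V]
    (ν : V → ℝ) (h0 : ∀ X, ν X = 0 → X = 0) (hs : ∀ (t : ℝ) X, ν (t • X) = |t| * ν X)
    (ha : ∀ X Y, ν (X + Y) ≤ ν X + ν Y) (f : V →ₗ[ℝ] ℝ) : ∃ C, ∀ X, f X ≤ C * ν X := by
  have hz : ν 0 = 0 := by simpa using hs 0 0
  have hn : ∀ X, 0 ≤ ν X := fun X => by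
    have h1 := ha X ((-1 : ℝ) • X)
    rw [hs] at h1
    simp [hz] at h1
    linarith
  let _ : Norm V := ⟨ν⟩
  have core : NormedSpace.Core ℝ V :=
    { norm_nonneg := hn
      norm_smul := fun c x => by rw [Real.norm_eq_abs]; exact hs c x
      norm_triangle := ha
      norm_eq_zero_iff := fun x => ⟨h0 x, fun h => by rw [h]; exact hz⟩ }
  let _ : NormedAddCommGroup V := NormedAddCommGroup.ofCore core
  let _ : NormedSpace ℝ V := NormedSpace.ofCore core
  refine ⟨‖f.toContinuousLinearMap‖, fun X => ?_⟩
  exact (le_abs_self _).trans (f.toContinuousLinearMap.le_opNorm X)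

lemma hip_add (Q X Y : HMat ι) : hip Q (X + Y) = hip Q X + hip Q Y := by
  simp [hip, Matrix.mul_add]

lemma hip_smul (Q : HMat ι) (t : ℝ) (X : HMat ι) : hip Q (t • X) = t * hip Q X := by
  simp [hip]

/-- Pairing with a fixed operator, as a linear functional. -/
def hipLin (Q : HMat ι) : HMat ι →ₗ[ℝ] ℝ where
  toFun := hip Q
  map_add' := hip_add Q
  map_smul' := fun t X => by simp [hip_smul]

lemma MatNorm.nonneg (ν : MatNorm ι) (X : HMat ι) : 0 ≤ ν.toFun X := by
  have hz : ν.toFun 0 = 0 := by simpa using ν.smul' 0 0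
  have h1 := ν.add_le' X ((-1 : ℝ) • X)
  rw [ν.smul'] at h1
  simp [hz] at h1
  linarith

/-- The Hölder-type inequality between a norm and its dual. -/
lemma hip_le_dual_mul (ν : MatNorm ι) (Q X : HMat ι) :
    hip Q X ≤ dualNormF ν.toFun Q * ν.toFun X := by
  have : FiniteDimensional ℝ (HMat ι) :=
    inferInstanceAs (FiniteDimensional ℝ (selfAdjoint.submodule ℝ (Matrix ι ι ℂ)))
  obtain ⟨C, hC⟩ := exists_bound_of_norm ν.toFun ν.eq_zero' ν.smul' ν.add_le' (hipLin Q)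
  have hC' : ∀ X, hip Q X ≤ C * ν.toFun X := hC
  rcases (ν.nonneg X).eq_or_lt with h | h
  · have := hC' X
    rw [← h] at this ⊢
    simpa using this
  · have hb : BddAbove {r | ∃ X, ν.toFun X ≤ 1 ∧ r = hip Q X} := by
      refine ⟨|C|, ?_⟩
      rintro r ⟨Z, hZ, rfl⟩
      have hZ0 := ν.nonneg Z
      calc hip Q Z ≤ C * ν.toFun Z := hC' Z
        _ ≤ |C| * ν.toFun Z := by gcongr; exact le_abs_self C
        _ ≤ |C| * 1 := by gcongr
        _ = |C| := mul_one _
    have := le_csSup hb ⟨(ν.toFun X)⁻¹ • X, by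
      rw [ν.smul', abs_of_pos (inv_pos.2 h), inv_mul_cancel₀ h.ne'], rfl⟩
    rw [hip_smul, inv_mul_le_iff₀ h] at this
    rw [mul_comm]
    exact this

/-- The diagonal of a Hermitian idempotent is bounded by one, because
`P i i = ∑ j, |P i j| ^ 2 ≥ (P i i) ^ 2`. -/
lemma abs_diag_le_one (P : Matrix ι ι ℂ) (hP : P.IsHermitian) (hPP : P * P = P) (i : ι) :
    |(P i i).re| ≤ 1 := by
  have h1 : (P i i).re = ∑ j, Complex.normSq (P i j) := by
    conv_lhs => rw [← hPP]
    rw [Matrix.mul_apply, Complex.re_sum]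
    refine Finset.sum_congr rfl fun j _ => ?_
    rw [← hP.apply j i, Complex.star_def, Complex.mul_conj, Complex.ofReal_re]
  have h2 : Complex.normSq (P i i) ≤ (P i i).re := by
    rw [h1]
    exact Finset.single_le_sum (f := fun j => Complex.normSq (P i j))
      (fun j _ => Complex.normSq_nonneg _) (Finset.mem_univ i)
  rw [Complex.normSq_apply] at h2
  rw [abs_le]
  constructor <;> nlinarith [mul_self_nonneg (P i i).im, mul_self_nonneg (P i i).re]

/-- Trace-norm/operator-norm duality for a projection: diagonalize `Z` and compare the eigenvalues
with the diagonal entries of the projection in the eigenbasis. -/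
lemma abs_hip_le_trNorm (P Z : HMat ι) (hPP : P.1 * P.1 = P.1) : |hip P Z| ≤ trNorm Z := by
  set U : Matrix ι ι ℂ := ((herm Z).eigenvectorUnitary).1 with hU
  have hUU : U * star U = 1 := Unitary.coe_mul_star_self _
  set R := star U * P.1 * U with hR
  have hRh : R.IsHermitian := by
    rw [hR, Matrix.star_eq_conjTranspose]
    exact Matrix.isHermitian_conjTranspose_mul_mul U (herm P)
  have hRR : R * R = R := by
    calc R * R = star U * P.1 * (U * star U) * P.1 * U := by simp only [hR, Matrix.mul_assoc]
      _ = star U * (P.1 * P.1) * U := by rw [hUU]; simp only [Matrix.mul_assoc, Matrix.one_mul]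
      _ = R := by rw [hPP]
  have hZ : Z.1 = U * Matrix.diagonal (RCLike.ofReal ∘ (herm Z).eigenvalues) * star U := by
    simpa [Unitary.conjStarAlgAut_apply] using (herm Z).spectral_theorem
  have key : hip P Z = ∑ i, (herm Z).eigenvalues i * (R i i).re := by
    have h1 : Matrix.trace (P.1 * Z.1) =
        Matrix.trace (R * Matrix.diagonal (RCLike.ofReal ∘ (herm Z).eigenvalues)) := by
      conv_lhs => rw [hZ, ← Matrix.mul_assoc, Matrix.trace_mul_comm]
      simp only [hR, Matrix.mul_assoc]
    rw [hip, h1, Matrix.trace, Complex.re_sum]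
    refine Finset.sum_congr rfl fun i _ => ?_
    simp [Matrix.mul_diagonal, mul_comm]
  rw [key, trNorm]
  refine (Finset.abs_sum_le_sum_abs _ _).trans (Finset.sum_le_sum fun i _ => ?_)
  rw [abs_mul]
  exact mul_le_of_le_one_right (abs_nonneg _) (abs_diag_le_one R hRh hRR i)

lemma tpow_mul_self {d : ℕ} (φ : HMat (Fin d)) (h : φ.1 * φ.1 = φ.1) (m : ℕ) :
    (tpow φ m).1 * (tpow φ m).1 = (tpow φ m).1 := by
  ext i j
  simp only [tpow, Matrix.mul_apply, Matrix.of_apply, ← Finset.prod_mul_distrib]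
  have := Finset.prod_univ_sum (fun _ : Fin m => (Finset.univ : Finset (Fin d)))
    (fun k x => φ.1 (i k) x * φ.1 x (j k))
  rw [Fintype.piFinset_univ] at this
  rw [← this]
  refine Finset.prod_congr rfl fun k _ => ?_
  rw [← Matrix.mul_apply, h]

lemma tpow_trace {d : ℕ} (φ : HMat (Fin d)) (h : Matrix.trace φ.1 = 1) (m : ℕ) :
    Matrix.trace (tpow φ m).1 = 1 := by
  simp only [tpow, Matrix.trace, Matrix.diag, Matrix.of_apply]
  have := Finset.prod_univ_sum (fun _ : Fin m => (Finset.univ : Finset (Fin d)))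
    (fun _ x => φ.1 x x)
  rw [Fintype.piFinset_univ] at this
  rw [← this]
  exact Finset.prod_eq_one fun k _ => h

/-- A lower bound on the overlap with the target, from contractivity in trace norm. -/
lemma overlap_lower_bound {P : HMat κ} (hPP : P.1 * P.1 = P.1) (hPt : Matrix.trace P.1 = 1)
    {σ X : HMat ι} (Λ : HMat ι →ₗ[ℝ] HMat κ) (hΛ : ∀ X, trNorm (Λ X) ≤ trNorm X) :
    1 - trNorm (X - σ) - trNorm (Λ σ - P) ≤ hip P (Λ X) := by
  have h1 : hip P P = 1 := by simp [hip, hPP, hPt]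
  have h2 : Λ X = P + Λ (X - σ) + (Λ σ - P) := by rw [map_sub]; abel
  have h3 := (abs_le.1 (abs_hip_le_trNorm P (Λ (X - σ)) hPP)).1
  have h4 := (abs_le.1 (abs_hip_le_trNorm P (Λ σ - P) hPP)).1
  have h5 := hΛ (X - σ)
  rw [h2, hip_add, hip_add, h1]
  linarith

/-- Positivity of `d` and `x`, needed to split the logarithm of their product, is forced by `h`. -/
lemma logb_sub_le {c d x : ℝ} (hc : 0 < c) (hx : 0 ≤ x) (h : c ≤ d * x) :
    Real.logb 2 c - Real.logb 2 d ≤ Real.logb 2 x := by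
  have hx' : 0 < x := hx.lt_of_ne fun h0 => by rw [← h0] at h; simp at h; linarith
  have hd : 0 < d := by
    by_contra! hd
    nlinarith
  have := Real.logb_le_logb_of_le (b := 2) (by norm_num) hc h
  rw [Real.logb_mul hd.ne' hx'.ne'] at this
  linarith

/-- **Theorem 4 (asymptotic upper bound on distillable resource).**
If `D > 0` is an achievable distillation rate from `ρ` to the pure state `φ`
via maps contracting the trace norm and the resource norms, then for every `ε ∈ [0,1)`,
`D · (− limsup (1/m) log₂ ‖φ^{⊗m}‖_μ°) ≤ liminf (1/n) inf {log₂ ‖X‖_μ : X ∈ B_ε(ρ^{⊗n})}`. -/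
theorem distillation_upper_bound
    {dA dB : ℕ}
    (νA : (n : ℕ) → ResourceNorm (Fin n → Fin dA))
    (νB : (n : ℕ) → ResourceNorm (Fin n → Fin dB))
    (ρ : HMat (Fin dA)) (hρ : IsState ρ)
    (φ : HMat (Fin dB)) (hφ : IsPureState φ)
    (D : ℝ) (hD : 0 < D)
    (Γ : (n : ℕ) → (HMat (Fin n → Fin dA) →ₗ[ℝ] HMat (Fin ⌊D * (n : ℝ)⌋₊ → Fin dB)))
    (hΓtr : ∀ n X, trNorm ((Γ n) X) ≤ trNorm X)
    (hΓμ : ∀ (n : ℕ) X, (νB ⌊D * (n : ℝ)⌋₊).toFun ((Γ n) X) ≤ (νA n).toFun X)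
    (hconv : Tendsto
      (fun n : ℕ => (1 / 2) * trNorm ((Γ n) (tpow ρ n) - tpow φ ⌊D * (n : ℝ)⌋₊))
      atTop (nhds 0))
    (ε : ℝ) (hε0 : 0 ≤ ε) (hε1 : ε < 1) :
    ((D : ℝ) : EReal) *
        (- Filter.limsup
          (fun m : ℕ =>
            (((m : ℝ)⁻¹ * Real.logb 2 (dualNormF (νB m).toFun (tpow φ m)) : ℝ) : EReal))
          atTop) ≤
      Filter.liminf (fun n : ℕ => (((n : ℝ)⁻¹ : ℝ) : EReal) *
        ⨅ X ∈ ball (tpow ρ n) ε, ((Real.logb 2 ((νA n).toFun X) : ℝ) : EReal)) atTop := by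
  set M : ℕ → ℕ := fun n => ⌊D * (n : ℝ)⌋₊ with hM
  have hMD : Tendsto (fun n : ℕ => (M n : ℝ) / (n : ℝ)) atTop (nhds D) :=
    (tendsto_nat_floor_mul_div_atTop hD.le).comp tendsto_natCast_atTop_atTop
  have hMtop : Tendsto M atTop atTop :=
    tendsto_nat_floor_atTop.comp (tendsto_natCast_atTop_atTop.const_mul_atTop hD)
  have hc : 0 < (1 - ε) / 2 := by linarith
  set c := (1 - ε) / 2 with hcdef
  -- Half of the gap `1 - ε` absorbs the vanishing error of `Γ n`.
  have hball : ∀ᶠ n in atTop, ∀ X ∈ ball (tpow ρ n) ε,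
      Real.logb 2 c - Real.logb 2 (dualNormF (νB (M n)).toFun (tpow φ (M n))) ≤
        Real.logb 2 ((νA n).toFun X) := by
    filter_upwards [hconv.eventually_lt_const (show (0 : ℝ) < c / 2 by linarith)] with n hn X hX
    have hov := overlap_lower_bound (tpow_mul_self φ hφ.2 (M n)) (tpow_trace φ hφ.1.2 (M n))
      (σ := tpow ρ n) (X := X) (Γ n) (hΓtr n)
    have hn' : trNorm ((Γ n) (tpow ρ n) - tpow φ (M n)) < c := by
      change 1 / 2 * trNorm ((Γ n) (tpow ρ n) - tpow φ (M n)) < c / 2 at hn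
      linarith
    have hov' : c ≤ hip (tpow φ (M n)) ((Γ n) X) := by
      have := hX.2
      linarith
    have hdual := hip_le_dual_mul (νB (M n)).toMatNorm (tpow φ (M n)) ((Γ n) X)
    have hY0 := (νB (M n)).toMatNorm.nonneg ((Γ n) X)
    exact (logb_sub_le hc hY0 (hov'.trans hdual)).trans <|
      Real.logb_le_logb_of_le (by norm_num)
        (hY0.lt_of_ne fun h0 => by
          rw [← h0, mul_zero] at hdual
          linarith)
        (hΓμ n X)
  rw [← EReal.ge_of_forall_gt_iff_ge]
  intro z hz
  set A := - Filter.limsup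
          (fun m : ℕ =>
            (((m : ℝ)⁻¹ * Real.logb 2 (dualNormF (νB m).toFun (tpow φ m)) : ℝ) : EReal))
          atTop with hA
  have hzA : ((z / D : ℝ) : EReal) < A := by
    clear_value A
    induction A with
    | bot => rw [EReal.coe_mul_bot_of_pos hD] at hz; exact absurd hz not_lt_bot
    | top => exact EReal.coe_lt_top _
    | coe a =>
      rw [← EReal.coe_mul, EReal.coe_lt_coe_iff] at hz
      rw [EReal.coe_lt_coe_iff, div_lt_iff₀ hD, mul_comm]
      exact hz
  obtain ⟨r, hzr, hrA⟩ := EReal.lt_iff_exists_real_btwn.1 hzA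
  rw [EReal.coe_lt_coe_iff, div_lt_iff₀ hD] at hzr
  have hlim := eventually_lt_of_limsup_lt (EReal.lt_neg_comm.1 hrA)
  have hlim' : ∀ᶠ m : ℕ in atTop,
      Real.logb 2 (dualNormF (νB m).toFun (tpow φ m)) ≤ - (r * m) := by
    filter_upwards [hlim, eventually_gt_atTop 0] with m hm hm0
    rw [← EReal.coe_neg, EReal.coe_lt_coe_iff] at hm
    have hm0' : (0 : ℝ) < m := Nat.cast_pos.2 hm0
    rw [inv_mul_lt_iff₀ hm0'] at hm
    linarith
  have hlow : Tendsto (fun n : ℕ => (n : ℝ)⁻¹ * Real.logb 2 c + r * ((M n : ℝ) / n)) atTop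
      (nhds (r * D)) := by
    simpa using (tendsto_inv_atTop_nhds_zero_nat.mul_const (Real.logb 2 c)).add (hMD.const_mul r)
  refine le_liminf_of_le (by isBoundedDefault) ?_
  filter_upwards [hball, hMtop.eventually hlim', hlow.eventually_const_lt hzr] with n h1 h2 h3
  have h4 : ((Real.logb 2 c + r * M n : ℝ) : EReal) ≤
      ⨅ X ∈ ball (tpow ρ n) ε, ((Real.logb 2 ((νA n).toFun X) : ℝ) : EReal) := by
    refine le_iInf₂ fun X hX => ?_
    rw [EReal.coe_le_coe_iff]
    have := h1 X hX
    linarith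
  have h5 : (0 : EReal) ≤ (((n : ℝ)⁻¹ : ℝ) : EReal) := by
    rw [EReal.coe_nonneg]; positivity
  refine le_trans ?_ (mul_le_mul_of_nonneg_left h4 h5)
  rw [← EReal.coe_mul, EReal.coe_le_coe_iff]
  calc z ≤ (n : ℝ)⁻¹ * Real.logb 2 c + r * ((M n : ℝ) / n) := h3.le
    _ = _ := by ring
end
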